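/- Let X = X_{a,b} be the Bourgain–Delbaen space. Then C([0,ω^ω]), the Banach space of continuous real-valued functions on the compact ordinal interval [0,ω^ω] with the order topology, is not isomorphic to a quotient of X; that is, there is no bounded linear surjection from X onto C([0,ω^ω]). -/

import Mathlib

open MeasureTheory Set Ordinal Filter
open scoped Classical

/-- `ℓ∞ = ℓ∞(ℕ)`. -/
noncomputable abbrev linf : Type := lp (fun _ : ℕ => ℝ) ⊤

/-- The `k`-th coordinate functional `e_k^*` on `ℓ∞`. -/
noncomputable def coordFn (k : ℕ) : linf →L[ℝ] ℝ :=
  LinearMap.mkContinuous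
    { toFun := fun x => x k
      map_add' := fun _ _ => rfl
      map_smul' := fun _ _ => rfl }
    1 (fun x => by
      rw [one_mul]
      exact lp.norm_apply_le_norm (E := fun _ : ℕ => ℝ) ENNReal.top_ne_zero x k)

/-- The `k`-th coordinate vector `e_k` of `ℓ∞`. -/
noncomputable def ek (k : ℕ) : linf := lp.single ⊤ k (1 : ℝ)

/-- `E_n = span{e_k : 1 ≤ k ≤ d n}`. -/
noncomputable def Esub (d : ℕ → ℕ) (n : ℕ) : Submodule ℝ linf :=
  Submodule.span ℝ {x : linf | ∃ k : ℕ, 1 ≤ k ∧ k ≤ d n ∧ x = ek k}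

/-- All the data of the Bourgain–Delbaen construction: the constants `a`, `b`, `λ`, the
dimensions `d n`, the enumeration `φ` of tuples `(σ',i,m,σ'',j)`, the coordinate projections
`π_m`, the embeddings `i_{m,n}` and the limit projections `P_m`, together with their defining
properties. -/
structure BDSetup where
  a : ℝ
  b : ℝ
  lam : ℝ
  hb : 0 < b
  hba : b < a
  ha : a < 1
  hlam : 1 < lam
  hineq : a + 2 * b * lam < lam
  /-- the dimensions -/
  d : ℕ → ℕ
  hd1 : d 1 = 1
  hd2 : d 2 = 2
  /-- the enumeration of the tuples `(σ', i, m, σ'', j)` -/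
  φ : ℕ → ℤ × ℕ × ℕ × ℤ × ℕ
  hφ : ∀ n : ℕ, 2 ≤ n → Set.BijOn φ {k : ℕ | d n < k ∧ k ≤ d (n + 1)}
      {q : ℤ × ℕ × ℕ × ℤ × ℕ | (q.1 = 1 ∨ q.1 = -1) ∧ (q.2.2.2.1 = 1 ∨ q.2.2.2.1 = -1) ∧
        1 ≤ q.2.2.1 ∧ q.2.2.1 < n ∧ 1 ≤ q.2.1 ∧ q.2.1 ≤ d q.2.2.1 ∧
        1 ≤ q.2.2.2.2 ∧ q.2.2.2.2 ≤ d n}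
  /-- the coordinate projections `π_m` -/
  pi : ℕ → (linf →L[ℝ] linf)
  hpi : ∀ (m : ℕ) (x : linf) (k : ℕ), pi m x k = if 1 ≤ k ∧ k ≤ d m then x k else 0
  /-- the embeddings `i_{m,n}` -/
  iMap : ℕ → ℕ → (linf →L[ℝ] linf)
  hi12 : ∀ x : linf, x ∈ Esub d 1 → iMap 1 2 x = x
  histep : ∀ n : ℕ, 2 ≤ n → ∀ x : linf, x ∈ Esub d n →
    iMap n (n + 1) x = x + ∑ k ∈ Finset.Ioc (d n) (d (n + 1)),
      (a * ((φ k).1 : ℝ) * x (φ k).2.1 +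
        b * (((φ k).2.2.2.1 : ℤ) : ℝ) *
          ((x - iMap (φ k).2.2.1 n (pi (φ k).2.2.1 x)) (φ k).2.2.2.2)) • ek k
  hicomp : ∀ m n : ℕ, 1 ≤ m → m < n → ∀ x : linf, x ∈ Esub d m →
    iMap m (n + 1) x = iMap n (n + 1) (iMap m n x)
  hinorm : ∀ m n : ℕ, 1 ≤ m → m < n → ∀ x : linf, x ∈ Esub d m → ‖iMap m n x‖ ≤ lam * ‖x‖
  /-- the coordinatewise limit projections `P_m` -/
  P : ℕ → (linf →L[ℝ] linf)
  hP0 : P 0 = 0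
  hPlim : ∀ m : ℕ, 1 ≤ m → ∀ (x : linf) (k : ℕ),
    Filter.Tendsto (fun n => (iMap m n (pi m x)) k) Filter.atTop (nhds (P m x k))
  hPproj : ∀ m : ℕ, (P m).comp (P m) = P m
  hPnorm : ∀ m : ℕ, ‖P m‖ ≤ lam

/-- The Bourgain–Delbaen space `X = X_{a,b}`, the closed linear span of `⋃ m, P_m(E_m)`. -/
noncomputable def Xsub (S : BDSetup) : Submodule ℝ linf :=
  (Submodule.span ℝ (⋃ m ∈ {m : ℕ | 1 ≤ m}, (S.P m) '' (Esub S.d m))).topologicalClosure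

/-- The restriction (quotient) map `Q : ℓ∞^* → X^*`. -/
noncomputable def QMap (S : BDSetup) (f : linf →L[ℝ] ℝ) : (Xsub S) →L[ℝ] ℝ :=
  f.comp (Xsub S).subtypeL

/-- The images `Q e_k^*` of the coordinate functionals in `X^*`. -/
noncomputable def Qe (S : BDSetup) (k : ℕ) : (Xsub S) →L[ℝ] ℝ := QMap S (coordFn k)

/-- Ordinal intervals `[0,θ]` are compact in the order topology. -/
noncomputable instance (θ : Ordinal) : CompactSpace (Set.Iic θ) :=
  isCompact_iff_compactSpace.mp (by rw [← Set.Icc_bot]; exact isCompact_Icc)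

section BDProof

/-! ### Ordinal trees -/

def GoodTree {K : Type*} [TopologicalSpace K] : ℕ → Set K → Prop
  | 0, A => A.Nonempty
  | (r + 1), A => ∃ B : ℕ → Set K, (∀ n, IsClopen (B n)) ∧ (∀ n m, n ≠ m → Disjoint (B n) (B m)) ∧
      (∀ n, B n ⊆ A) ∧ ∀ n, GoodTree r (B n)

theorem clopen_Ioc_ord (θ β γ : Ordinal) :
    IsClopen {x : Set.Iic θ | β < x.1 ∧ x.1 ≤ γ} := by
  have h : IsClopen (Set.Ioc β γ) := by
    constructor
    · have : Set.Ioc β γ = Set.Icc (Order.succ β) γ := by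
        ext x
        simp
      rw [this]; exact isClosed_Icc
    · have : Set.Ioc β γ = Set.Ioo β (Order.succ γ) := by
        ext x
        simp
      rw [this]; exact isOpen_Ioo
  exact h.preimage continuous_subtype_val

theorem goodTree_ord (θ : Ordinal) (r : ℕ) : ∀ β : Ordinal, β + ω ^ r ≤ θ →
    GoodTree r {x : Set.Iic θ | β < x.1 ∧ x.1 ≤ β + ω ^ r} := by
  induction r with
  | zero =>
    intro β h
    exact ⟨⟨β + ω ^ 0, h⟩, by simp, le_rfl⟩
  | succ r ih =>
    intro β h
    have key : ∀ k : ℕ, β + ω ^ r * (k : Ordinal) + ω ^ r = β + ω ^ r * ((k + 1 : ℕ) : Ordinal) := by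
      intro k
      push_cast
      rw [mul_add, mul_one, add_assoc]
    have key2 : ∀ k : ℕ, β + ω ^ r * (k : Ordinal) + ω ^ r ≤ β + ω ^ (r + 1) := by
      intro k
      rw [key, pow_succ]
      gcongr
      exact (Ordinal.natCast_lt_omega0 _).le
    have dis : ∀ n m : ℕ, n < m → Disjoint
        {x : Set.Iic θ | β + ω ^ r * (n : Ordinal) < x.1 ∧ x.1 ≤ β + ω ^ r * (n : Ordinal) + ω ^ r}
        {x : Set.Iic θ | β + ω ^ r * (m : Ordinal) < x.1 ∧ x.1 ≤ β + ω ^ r * (m : Ordinal) + ω ^ r} := by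
      intro n m hnm
      rw [Set.disjoint_left]
      rintro x ⟨_, h1⟩ ⟨h2, _⟩
      rw [key] at h1
      have : β + ω ^ r * ((n + 1 : ℕ) : Ordinal) ≤ β + ω ^ r * (m : Ordinal) := by
        gcongr
        exact hnm
      exact absurd (h2.trans_le (h1.trans this)) (lt_irrefl _)
    refine ⟨fun k => {x : Set.Iic θ | β + ω ^ r * (k : Ordinal) < x.1 ∧
      x.1 ≤ β + ω ^ r * (k : Ordinal) + ω ^ r}, fun k => clopen_Ioc_ord _ _ _, ?_, ?_, ?_⟩
    · intro n m hnm
      rcases lt_or_gt_of_ne hnm with h | h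
      · exact dis n m h
      · exact (dis m n h).symm
    · rintro n x ⟨h1, h2⟩
      refine ⟨lt_of_le_of_lt ?_ h1, h2.trans (key2 n)⟩
      exact le_self_add
    · intro n
      exact ih _ ((key2 n).trans h)

theorem goodTree_omega (N : ℕ) : GoodTree N
    {x : Set.Iic ((ω : Ordinal) ^ (ω : Ordinal)) | 0 < x.1 ∧ x.1 ≤ 0 + ω ^ N} := by
  apply goodTree_ord
  rw [zero_add, ← Ordinal.opow_natCast]
  exact Ordinal.opow_le_opow_right Ordinal.omega0_pos (Ordinal.natCast_lt_omega0 _).le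

/-! ### The Bourgain-Delbaen part -/

namespace BDSetup
variable (S : BDSetup)

theorem one_le_d : ∀ n, 1 ≤ n → 1 ≤ S.d n ∧ S.d n < S.d (n + 1) := by
  intro n hn
  induction n, hn using Nat.le_induction with
  | base => rw [S.hd1]; norm_num [S.hd2]
  | succ n hn ih =>
    have h1 : 1 ≤ S.d (n + 1) := by omega
    refine ⟨h1, ?_⟩
    obtain ⟨k, hk, -⟩ := (S.hφ (n + 1) (by omega)).surjOn
      (show ((1 : ℤ), 1, 1, (1 : ℤ), 1) ∈ _ from
        ⟨Or.inl rfl, Or.inl rfl, le_rfl, by show 1 < n + 1; omega, le_rfl,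
          by show 1 ≤ S.d 1; rw [S.hd1], le_rfl, h1⟩)
    exact hk.1.trans_le hk.2

theorem d_mono {m n : ℕ} (hm : 1 ≤ m) (h : m ≤ n) : S.d m ≤ S.d n := by
  induction n, h using Nat.le_induction with
  | base => exact le_rfl
  | succ n hn ih => exact ih.trans (S.one_le_d n (by omega)).2.le

theorem d_ge (n : ℕ) : 1 ≤ n → n ≤ S.d n := by
  intro hn
  induction n, hn using Nat.le_induction with
  | base => rw [S.hd1]
  | succ n hn ih => have := (S.one_le_d n hn).2; omega

theorem exists_rank (k : ℕ) (hk : S.d 2 < k) : ∃ n, 2 ≤ n ∧ S.d n < k ∧ k ≤ S.d (n + 1) := by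
  by_contra! hcon
  have : ∀ n, 2 ≤ n → S.d n < k := by
    intro n hn
    induction n, hn using Nat.le_induction with
    | base => exact hk
    | succ n hn ih => exact hcon n hn ih
  have h1 := this (k + 2) (by omega)
  have h2 := S.d_ge (k + 2) (by omega)
  omega

theorem mem_Esub_iff (n : ℕ) (x : linf) :
    x ∈ Esub S.d n ↔ ∀ k, ¬ (1 ≤ k ∧ k ≤ S.d n) → x k = 0 := by
  constructor
  · intro h k hk
    unfold Esub at h
    induction h using Submodule.span_induction with
    | mem x hx =>
      obtain ⟨j, h1, h2, rfl⟩ := hx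
      have : k ≠ j := by rintro rfl; exact hk ⟨h1, h2⟩
      simp [ek, lp.single_apply, this]
    | zero => rfl
    | add x y _ _ hx hy => show x k + y k = 0; rw [hx, hy, add_zero]
    | smul c x _ hx => show c * x k = 0; rw [hx, mul_zero]
  · intro h
    have : x = ∑ k ∈ Finset.Icc 1 (S.d n), x k • ek k := by
      ext j
      have h2 : (∑ k ∈ Finset.Icc 1 (S.d n), x k • ek k : linf) j =
          ∑ k ∈ Finset.Icc 1 (S.d n), x k * (ek k j) := by
        rw [lp.coeFn_sum, Finset.sum_apply]
        rfl
      rw [h2]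
      by_cases hj : j ∈ Finset.Icc 1 (S.d n)
      · rw [Finset.sum_eq_single j]
        · simp [ek]
        · intro b _ hb
          simp [ek, lp.single_apply, hb.symm]
        · exact fun h => absurd hj h
      · rw [h j (by simpa using hj), Finset.sum_eq_zero]
        intro b hb
        have : j ≠ b := by rintro rfl; exact hj hb
        simp [ek, lp.single_apply, this]
    rw [this]
    refine Submodule.sum_mem _ fun k hk => Submodule.smul_mem _ _ (Submodule.subset_span ?_)
    rw [Finset.mem_Icc] at hk
    exact ⟨k, hk.1, hk.2, rfl⟩

theorem pi_mem (n : ℕ) (x : linf) : S.pi n x ∈ Esub S.d n := by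
  rw [mem_Esub_iff]
  intro k hk
  rw [S.hpi, if_neg hk]

theorem Esub_mono {m n : ℕ} (hm : 1 ≤ m) (h : m ≤ n) {x : linf} (hx : x ∈ Esub S.d m) :
    x ∈ Esub S.d n := by
  rw [mem_Esub_iff] at *
  intro k hk
  apply hx
  have := S.d_mono hm h
  omega

/-- one step: value at coordinates -/
theorem step_apply (n : ℕ) (hn : 2 ≤ n) (x : linf) (hx : x ∈ Esub S.d n) (j : ℕ) :
    S.iMap n (n + 1) x j = x j + if S.d n < j ∧ j ≤ S.d (n + 1) then
      (S.a * ((S.φ j).1 : ℝ) * x (S.φ j).2.1 +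
        S.b * (((S.φ j).2.2.2.1 : ℤ) : ℝ) *
          ((x - S.iMap (S.φ j).2.2.1 n (S.pi (S.φ j).2.2.1 x)) (S.φ j).2.2.2.2)) else 0 := by
  rw [S.histep n hn x hx]
  rw [lp.coeFn_add, Pi.add_apply, lp.coeFn_sum, Finset.sum_apply]
  congr 1
  split_ifs with h
  · rw [Finset.sum_eq_single j]
    · simp [ek]
    · intro b _ hb
      simp [ek, lp.single_apply, hb.symm]
    · intro h'
      exact absurd (Finset.mem_Ioc.2 h) h'
  · apply Finset.sum_eq_zero
    intro b hb
    have : j ≠ b := by rintro rfl; exact h (Finset.mem_Ioc.1 hb)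
    simp [ek, lp.single_apply, this]

theorem step_agree (n : ℕ) (hn : 1 ≤ n) (x : linf) (hx : x ∈ Esub S.d n) (j : ℕ)
    (hj : j ≤ S.d n) : S.iMap n (n + 1) x j = x j := by
  rcases hn.eq_or_lt with rfl | hn
  · rw [S.hi12 x hx]
  · rw [S.step_apply n hn x hx, if_neg (by omega), add_zero]

theorem step_mem (n : ℕ) (hn : 1 ≤ n) (x : linf) (hx : x ∈ Esub S.d n) :
    S.iMap n (n + 1) x ∈ Esub S.d (n + 1) := by
  rcases hn.eq_or_lt with rfl | hn'
  · rw [S.hi12 x hx]; exact S.Esub_mono le_rfl (by norm_num) hx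
  · rw [mem_Esub_iff]
    intro k hk
    have := (S.one_le_d n hn).2
    rw [S.step_apply n hn' x hx, if_neg (by omega), add_zero]
    exact (S.mem_Esub_iff n x).1 hx k (by omega)

theorem iMap_mem (m n : ℕ) (hm : 1 ≤ m) (h : m < n) (x : linf) (hx : x ∈ Esub S.d m) :
    S.iMap m n x ∈ Esub S.d n := by
  induction n, h using Nat.le_induction with
  | base => exact S.step_mem m hm x hx
  | succ n hn ih =>
    rw [S.hicomp m n hm hn x hx]
    exact S.step_mem n (by omega) _ ih

theorem iMap_agree (m n N : ℕ) (hm : 1 ≤ m) (h : m < n) (hN : n ≤ N) (x : linf)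
    (hx : x ∈ Esub S.d m) (j : ℕ) (hj : j ≤ S.d n) : S.iMap m N x j = S.iMap m n x j := by
  induction N, hN using Nat.le_induction with
  | base => rfl
  | succ N hN ih =>
    rw [S.hicomp m N hm (by omega) x hx, S.step_agree N (by omega) _
      (S.iMap_mem m N hm (by omega) x hx) j (hj.trans (S.d_mono (by omega) hN)), ih]

theorem P_apply (m n : ℕ) (hm : 1 ≤ m) (h : m < n) (x : linf) (j : ℕ) (hj : j ≤ S.d n) :
    S.P m x j = S.iMap m n (S.pi m x) j := by
  refine tendsto_nhds_unique (S.hPlim m hm x j) ?_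
  refine tendsto_const_nhds.congr' ?_
  filter_upwards [Filter.eventually_ge_atTop n] with N hN
  exact (S.iMap_agree m n N hm h hN _ (S.pi_mem m x) j hj).symm

theorem P_agree (m : ℕ) (hm : 1 ≤ m) (x : linf) (j : ℕ) (hj1 : 1 ≤ j) (hj : j ≤ S.d m) :
    S.P m x j = x j := by
  rw [S.P_apply m (m + 1) hm (by omega) x j (hj.trans (S.one_le_d m hm).2.le),
    S.step_agree m hm _ (S.pi_mem m x) j hj, S.hpi, if_pos ⟨hj1, hj⟩]

theorem P_congr (m : ℕ) (hm : 1 ≤ m) (x y : linf) (h : S.pi m x = S.pi m y) :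
    S.P m x = S.P m y := by
  ext j
  refine tendsto_nhds_unique (S.hPlim m hm x j) ?_
  rw [h]
  exact S.hPlim m hm y j

theorem pi_idem (m : ℕ) (x : linf) : S.pi m (S.pi m x) = S.pi m x := by
  ext j
  rw [S.hpi, S.hpi]
  split_ifs <;> rfl

theorem P_pi (m : ℕ) (hm : 1 ≤ m) (x : linf) : S.P m (S.pi m x) = S.P m x :=
  S.P_congr m hm _ _ (S.pi_idem m x)

theorem iMap_comp (m N : ℕ) (hm : 1 ≤ m) (h : m + 1 < N) (x : linf) (hx : x ∈ Esub S.d m) :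
    S.iMap m N x = S.iMap (m + 1) N (S.iMap m (m + 1) x) := by
  induction N, h using Nat.le_induction with
  | base => exact S.hicomp m (m + 1) hm (by omega) x hx
  | succ N hN ih =>
    rw [S.hicomp m N hm (by omega) x hx, ih,
      S.hicomp (m + 1) N (by omega) hN _ (S.step_mem m hm x hx)]

theorem P_succ_fix (M : ℕ) (hM : 1 ≤ M) (x : linf) (hx : S.P M x = x) : S.P (M + 1) x = x := by
  have h1 : S.pi (M + 1) x = S.iMap M (M + 1) (S.pi M x) := by
    ext j
    rw [S.hpi]
    split_ifs with h
    · rw [← S.P_apply M (M + 1) hM (by omega) x j h.2, hx]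
    · exact ((S.mem_Esub_iff _ _).1 (S.step_mem M hM _ (S.pi_mem M x)) j h).symm
  ext j
  conv_rhs => rw [← hx]
  refine tendsto_nhds_unique (S.hPlim (M + 1) (by omega) x j) ?_
  refine (S.hPlim M hM x j).congr' ?_
  filter_upwards [Filter.eventually_ge_atTop (M + 2)] with N hN
  rw [h1, S.iMap_comp M N hM (by omega) _ (S.pi_mem M x)]

theorem P_fix_mono {M N : ℕ} (hM : 1 ≤ M) (h : M ≤ N) (x : linf) (hx : S.P M x = x) :
    S.P N x = x := by
  induction N, h using Nat.le_induction with
  | base => exact hx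
  | succ N hN ih => exact S.P_succ_fix N (by omega) x ih

theorem P_zero_of (m : ℕ) (hm : 1 ≤ m) (x : linf) (h : ∀ k ≤ S.d m, x k = 0) : S.P m x = 0 := by
  have : S.pi m x = S.pi m 0 := by
    ext j
    rw [S.hpi, S.hpi]
    split_ifs with hj
    · exact h j hj.2
    · rfl
  rw [S.P_congr m hm x 0 this, map_zero]

/-- The recursion formula for coordinates. -/
theorem coord_rec (n : ℕ) (hn : 2 ≤ n) (k : ℕ) (hk : S.d n < k) (hk' : k ≤ S.d (n + 1)) :
    ∃ (s t : ℝ) (i m j : ℕ), |s| = 1 ∧ |t| = 1 ∧ 1 ≤ m ∧ m < n ∧ i ≤ S.d m ∧ j ≤ S.d n ∧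
      ∀ x : linf, S.P n x = x → x k = S.a * s * x i + S.b * t * (x j - S.P m x j) := by
  have hmem := (S.hφ n hn).mapsTo (show k ∈ {k : ℕ | S.d n < k ∧ k ≤ S.d (n + 1)} from ⟨hk, hk'⟩)
  obtain ⟨h1, h2, h3, h4, h5, h6, h7, h8⟩ := hmem
  refine ⟨((S.φ k).1 : ℝ), ((S.φ k).2.2.2.1 : ℝ), (S.φ k).2.1, (S.φ k).2.2.1, (S.φ k).2.2.2.2,
    ?_, ?_, h3, h4, h6, h8, ?_⟩
  · rcases h1 with h | h <;> rw [h] <;> simp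
  · rcases h2 with h | h <;> rw [h] <;> simp
  intro x hx
  have e1 : x k = S.iMap n (n + 1) (S.pi n x) k := by
    rw [← S.P_apply n (n + 1) (by omega) (by omega) x k hk', hx]
  have e2 : S.pi (S.φ k).2.2.1 (S.pi n x) = S.pi (S.φ k).2.2.1 x := by
    ext j
    rw [S.hpi, S.hpi, S.hpi]
    have := S.d_mono h3 h4.le
    split_ifs <;> first | rfl | omega
  rw [e1, S.step_apply n hn _ (S.pi_mem n x), if_pos ⟨hk, hk'⟩, e2, lp.coeFn_sub, Pi.sub_apply,
    ← S.P_apply _ n h3 h4 x _ h8, S.hpi, S.hpi, S.hpi, if_neg (by omega), zero_add,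
    if_pos ⟨h5, h6.trans (S.d_mono h3 h4.le)⟩, if_pos ⟨h7, h8⟩]

theorem approx (x : linf) (hx : x ∈ Xsub S) (ε : ℝ) (hε : 0 < ε) :
    ∃ (y : linf) (M : ℕ), 1 ≤ M ∧ S.P M y = y ∧ ‖x - y‖ < ε := by
  unfold Xsub at hx
  rw [← SetLike.mem_coe, Submodule.topologicalClosure_coe, Metric.mem_closure_iff] at hx
  obtain ⟨y, hy, hxy⟩ := hx ε hε
  rw [dist_eq_norm] at hxy
  suffices h : ∃ M, 1 ≤ M ∧ S.P M y = y by
    obtain ⟨M, h1, h2⟩ := h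
    exact ⟨y, M, h1, h2, hxy⟩
  clear hxy
  rw [SetLike.mem_coe] at hy
  induction hy using Submodule.span_induction with
  | mem x hx =>
    simp only [Set.mem_iUnion] at hx
    obtain ⟨m, hm, e, -, rfl⟩ := hx
    refine ⟨m, hm, ?_⟩
    exact congrArg (fun f : linf →L[ℝ] linf => f e) (S.hPproj m)
  | zero => exact ⟨1, le_rfl, map_zero _⟩
  | add x y _ _ hx hy =>
    obtain ⟨M, h1, h2⟩ := hx
    obtain ⟨N, h3, h4⟩ := hy
    refine ⟨max M N, by omega, ?_⟩
    rw [map_add, S.P_fix_mono h1 (le_max_left _ _) x h2, S.P_fix_mono h3 (le_max_right _ _) y h4]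
  | smul c x _ hx =>
    obtain ⟨M, h1, h2⟩ := hx
    exact ⟨M, h1, by rw [map_smul, h2]⟩

end BDSetup

theorem holder_two (a b : ℝ) (ha0 : 0 < a) (ha : a < 1) (hb0 : 0 < b) (hb : b < 1) :
    ∃ θ ρ : ℝ, 0 < θ ∧ θ < 1 ∧ 0 ≤ ρ ∧ ρ < 1 ∧ ∀ u v w : ℝ, 0 ≤ u → 0 ≤ v → u + v ≤ w →
      a * u ^ θ + b * v ^ θ ≤ ρ * w ^ θ := by
  have h1 := (tendsto_pow_atTop_nhds_zero_of_lt_one ha0.le ha).add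
    (tendsto_pow_atTop_nhds_zero_of_lt_one hb0.le hb)
  rw [add_zero] at h1
  obtain ⟨q, hq, hq2⟩ := ((h1.eventually (gt_mem_nhds one_pos)).and
    (Filter.eventually_ge_atTop 2)).exists
  have hq1 : (1 : ℝ) < (q : ℝ) := by exact_mod_cast hq2
  have hpq := Real.HolderConjugate.conjExponent hq1
  set p := Real.conjExponent (q : ℝ) with hp
  have hp1 : 1 < p := hpq.symm.lt
  refine ⟨1 / p, (a ^ q + b ^ q) ^ (1 / (q : ℝ)), by positivity, ?_, by positivity, ?_, ?_⟩
  · rw [div_lt_one (by linarith)]; exact hp1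
  · exact Real.rpow_lt_one (by positivity) hq (by positivity)
  · intro u v w hu hv huv
    have h := Real.inner_le_Lp_mul_Lq_of_nonneg (Finset.univ : Finset (Fin 2))
      (f := ![a, b]) (g := ![u ^ (1 / p), v ^ (1 / p)]) hpq
      (by intro i _; fin_cases i <;> simp <;> positivity)
      (by intro i _; fin_cases i <;> simp <;> positivity)
    simp only [Fin.sum_univ_two, Matrix.cons_val_zero, Matrix.cons_val_one, Real.rpow_natCast] at h
    have e : ∀ u : ℝ, 0 ≤ u → (u ^ (1 / p)) ^ p = u := by
      intro u hu
      rw [← Real.rpow_mul hu, one_div_mul_cancel (by linarith), Real.rpow_one]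
    rw [e u hu, e v hv] at h
    refine h.trans ?_
    gcongr

theorem cut (L : ℕ → ℕ) (hL : Monotone L) (p q m : ℕ) (hpq : p ≤ q) :
    ∃ t, p ≤ t ∧ t ≤ q ∧ (∀ j, p ≤ j → j < t → L (j + 1) ≤ m) ∧ (t < q → m < L (t + 1)) ∧
      (∀ j, t < j → j < q → m < L j) := by
  have hex : ∃ t, p ≤ t ∧ (t = q ∨ m < L (t + 1)) := ⟨q, hpq, Or.inl rfl⟩
  have hs := Nat.find_spec hex
  have hmin := fun j (hj : j < Nat.find hex) => Nat.find_min hex hj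
  have hle : Nat.find hex ≤ q := Nat.find_min' hex ⟨hpq, Or.inl rfl⟩
  generalize Nat.find hex = t at *
  have h4 : t < q → m < L (t + 1) := by
    intro h; rcases hs.2 with h' | h'
    · omega
    · exact h'
  refine ⟨t, hs.1, hle, ?_, h4, ?_⟩
  · intro j hj hjt
    have := hmin j hjt
    by_contra hc
    exact this ⟨hj, Or.inr (by omega)⟩
  · intro j hj hjq
    exact (h4 (by omega)).trans_le (hL hj)

namespace BDSetup
variable (S : BDSetup)

theorem block_est (θ ρ : ℝ) (hθ : 0 < θ) (hρ1 : ρ < 1)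
    (hold : ∀ u v w : ℝ, 0 ≤ u → 0 ≤ v → u + v ≤ w →
      S.a * u ^ θ + S.b * v ^ θ ≤ ρ * w ^ θ)
    (r : ℕ) (z : ℕ → linf) (L : ℕ → ℕ) (D : ℝ) (hL : Monotone L) (hL0 : 2 ≤ L 0)
    (hz : ∀ j < r, ‖z j‖ ≤ D) (hzP : ∀ j < r, S.P (L (j + 1)) (z j) = z j)
    (hz0 : ∀ j < r, ∀ k ≤ S.d (L j), z j k = 0) (hD : 0 ≤ D) (k : ℕ) :
    ∀ p q, p ≤ q → q ≤ r →
      |∑ j ∈ Finset.Ico p q, z j k| ≤ (2 * D / (1 - ρ)) * ((q : ℝ) - p) ^ θ := by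
  have hb := S.hb
  have ha : 0 < S.a := S.hb.trans S.hba
  have hρ' : 0 < 1 - ρ := by linarith
  set K := 2 * D / (1 - ρ) with hK
  have hK0 : 0 ≤ K := by positivity
  have hKρ : K * ρ + 2 * D = K := by rw [hK]; field_simp; ring
  have hL2 : ∀ j, 2 ≤ L j := fun j => hL0.trans (hL (Nat.zero_le j))
  have hzk : ∀ j < r, ∀ k, |z j k| ≤ D := fun j hj k =>
    (lp.norm_apply_le_norm (E := fun _ : ℕ => ℝ) ENNReal.top_ne_zero (z j) k).trans (hz j hj)
  induction k using Nat.strong_induction_on with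
  | _ k ih =>
  intro p q hpq hqr
  have hpq' : (p : ℝ) ≤ q := by exact_mod_cast hpq
  rcases le_or_gt k (S.d 2) with hk | hk
  · rw [Finset.sum_eq_zero]
    · rw [abs_zero]
      exact mul_nonneg hK0 (Real.rpow_nonneg (by linarith) _)
    · intro j hj
      rw [Finset.mem_Ico] at hj
      exact hz0 j (by omega) k (hk.trans (S.d_mono (by norm_num) (hL2 j)))
  rcases hpq.eq_or_lt with rfl | hlt
  · simp [Real.zero_rpow hθ.ne']
  obtain ⟨n, hn, hnk, hkn⟩ := S.exists_rank k hk
  obtain ⟨s, t, i, m, j', hs, ht, hm, hmn, hi, hj', hrec⟩ := S.coord_rec n hn k hnk hkn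
  obtain ⟨t1, hp1, h1q, hA1, hA2, hA3⟩ := cut L hL p q m hpq
  obtain ⟨t2, hp2, h2q, hB1, hB2, hB3⟩ := cut L hL p q n hpq
  have h12 : t1 ≤ t2 := by
    by_contra hc
    have e1 := hA1 t2 hp2 (by omega)
    have e2 := hB2 (by omega)
    omega
  have hdm := S.d_mono hm hmn.le
  have hn1 : 1 ≤ n := by omega
  have rec' : ∀ j, p ≤ j → j < t2 →
      z j k = S.a * s * z j i + S.b * t * (z j j' - S.P m (z j) j') := by
    intro j hpj hj
    have h2 := hL2 (j + 1)
    exact hrec _ (S.P_fix_mono (by omega) (hB1 j hpj hj) _ (hzP j (by omega)))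
  have bA : |∑ j ∈ Finset.Ico p t1, z j k| ≤ S.a * (K * ((t1 : ℝ) - p) ^ θ) := by
    have : ∑ j ∈ Finset.Ico p t1, z j k = S.a * s * ∑ j ∈ Finset.Ico p t1, z j i := by
      rw [Finset.mul_sum]
      refine Finset.sum_congr rfl fun j hj => ?_
      rw [Finset.mem_Ico] at hj
      have h2 := hL2 (j + 1)
      rw [rec' j hj.1 (by omega), S.P_fix_mono (by omega) (hA1 j hj.1 hj.2) _ (hzP j (by omega))]
      ring
    rw [this, abs_mul, abs_mul, hs, abs_of_pos ha, mul_one]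
    exact mul_le_mul_of_nonneg_left (ih i (by omega) p t1 hp1 (by omega)) ha.le
  have bB : |∑ j ∈ Finset.Ico t1 t2, z j k| ≤ D + S.b * (K * ((t2 : ℝ) - t1) ^ θ) := by
    rcases h12.eq_or_lt with h | h
    · rw [h]
      simp [Real.zero_rpow hθ.ne', hD]
    · rw [Finset.sum_eq_sum_Ico_succ_bot h]
      refine (abs_add_le _ _).trans (add_le_add (hzk _ (by omega) _) ?_)
      have : ∑ j ∈ Finset.Ico (t1 + 1) t2, z j k
          = S.b * t * ∑ j ∈ Finset.Ico (t1 + 1) t2, z j j' := by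
        rw [Finset.mul_sum]
        refine Finset.sum_congr rfl fun j hj => ?_
        rw [Finset.mem_Ico] at hj
        have hmL := hA3 j (by omega) (by omega)
        have hdL := S.d_mono hm hmL.le
        have hzero := hz0 j (by omega)
        rw [rec' j (by omega) (by omega), hzero i (by omega),
          S.P_zero_of m hm _ (fun k hk => hzero k (by omega))]
        simp
      rw [this, abs_mul, abs_mul, ht, abs_of_pos hb, mul_one]
      refine mul_le_mul_of_nonneg_left
        ((ih j' (by omega) (t1 + 1) t2 h (by omega)).trans ?_) hb.le
      have h3 : ((t1 + 1 : ℕ) : ℝ) ≤ t2 := by exact_mod_cast h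
      refine mul_le_mul_of_nonneg_left (Real.rpow_le_rpow (by linarith) ?_ hθ.le) hK0
      push_cast
      linarith
  have bC : |∑ j ∈ Finset.Ico t2 q, z j k| ≤ D := by
    rcases h2q.eq_or_lt with h | h
    · rw [h]; simpa using hD
    · rw [Finset.sum_eq_sum_Ico_succ_bot h, Finset.sum_eq_zero, add_zero]
      · exact hzk _ (by omega) _
      · intro j hj
        rw [Finset.mem_Ico] at hj
        have hnL := hB3 j (by omega) (by omega)
        exact hz0 j (by omega) k (hkn.trans (S.d_mono (by omega) hnL))
  have hsum : ∑ j ∈ Finset.Ico p q, z j k = ∑ j ∈ Finset.Ico p t1, z j k +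
      ∑ j ∈ Finset.Ico t1 t2, z j k + ∑ j ∈ Finset.Ico t2 q, z j k := by
    rw [Finset.sum_Ico_consecutive _ hp1 h12, Finset.sum_Ico_consecutive _ hp2 h2q]
  rw [hsum]
  have c1 : (p : ℝ) ≤ t1 := by exact_mod_cast hp1
  have c2 : (t1 : ℝ) ≤ t2 := by exact_mod_cast h12
  have c3 : (t2 : ℝ) ≤ q := by exact_mod_cast h2q
  have c4 : (p : ℝ) + 1 ≤ q := by exact_mod_cast hlt
  have hh := hold ((t1 : ℝ) - p) ((t2 : ℝ) - t1) ((q : ℝ) - p) (by linarith) (by linarith)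
    (by linarith)
  have hone : 1 ≤ ((q : ℝ) - p) ^ θ := Real.one_le_rpow (by linarith) hθ.le
  have t3 := abs_add_three (∑ j ∈ Finset.Ico p t1, z j k) (∑ j ∈ Finset.Ico t1 t2, z j k)
    (∑ j ∈ Finset.Ico t2 q, z j k)
  have hh2 := mul_le_mul_of_nonneg_left hh hK0
  have hh3 := mul_le_mul_of_nonneg_left hone (by linarith : 0 ≤ 2 * D)
  have : K * ((q : ℝ) - p) ^ θ = K * (ρ * ((q : ℝ) - p) ^ θ) + 2 * D * ((q : ℝ) - p) ^ θ := by
    conv_lhs => rw [← hKρ]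
    ring
  rw [this]
  linarith

/-- two members of a bounded sequence are close on the first coordinates -/
theorem exists_close (l : ℕ) (hl : 1 ≤ l) (x : ℕ → linf) (C : ℝ) (hx : ∀ n, ‖x n‖ ≤ C) (δ : ℝ)
    (hδ : 0 < δ) : ∃ n m, n ≠ m ∧ ‖S.P l (x n - x m)‖ ≤ δ := by
  let y : ℕ → (Fin (S.d l + 1) → ℝ) := fun n i => x n i
  have hy : ∀ n, y n ∈ Metric.closedBall (0 : Fin (S.d l + 1) → ℝ) C := by
    intro n
    rw [mem_closedBall_zero_iff, pi_norm_le_iff_of_nonneg ((norm_nonneg _).trans (hx n))]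
    intro i
    exact (lp.norm_apply_le_norm (E := fun _ : ℕ => ℝ) ENNReal.top_ne_zero (x n) i).trans (hx n)
  obtain ⟨w, -, ψ, hψ, hlim⟩ := tendsto_subseq_of_bounded Metric.isBounded_closedBall hy
  have hlam : 0 < S.lam := by linarith [S.hlam]
  obtain ⟨N, hN⟩ := Metric.cauchySeq_iff.1 hlim.cauchySeq (δ / S.lam) (by positivity)
  refine ⟨ψ N, ψ (N + 1), (hψ (Nat.lt_succ_self N)).ne, ?_⟩
  have h := hN N le_rfl (N + 1) (by omega)
  rw [dist_pi_lt_iff (by positivity)] at h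
  rw [← S.P_pi l hl]
  have h1 : ‖S.pi l (x (ψ N) - x (ψ (N + 1)))‖ ≤ δ / S.lam := by
    refine lp.norm_le_of_forall_le (by positivity) fun k => ?_
    rw [S.hpi]
    split_ifs with hk
    · have := h ⟨k, by omega⟩
      rw [dist_eq_norm] at this
      exact this.le
    · rw [norm_zero]; positivity
  calc _ ≤ ‖S.P l‖ * ‖S.pi l (x (ψ N) - x (ψ (N + 1)))‖ := (S.P l).le_opNorm _
    _ ≤ S.lam * (δ / S.lam) := by
      gcongr
      exact S.hPnorm l
    _ = δ := by field_simp

theorem exists_block (l : ℕ) (hl : 1 ≤ l) (x : ℕ → Xsub S) (C : ℝ) (hx : ∀ n, ‖x n‖ ≤ C) (ε : ℝ)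
    (hε : 0 < ε) : ∃ n m, n ≠ m ∧ ∃ (z : linf) (M : ℕ), l ≤ M ∧ S.P M z = z ∧
      (∀ k ≤ S.d l, z k = 0) ∧ ‖((x n - x m : Xsub S) : linf) - z‖ ≤ ε := by
  obtain ⟨n, m, hnm, h⟩ := S.exists_close l hl (fun n => (x n : linf)) C hx (ε / 2) (by positivity)
  have hlam : 0 < S.lam := by linarith [S.hlam]
  obtain ⟨y, M, hM, hyM, hy⟩ := S.approx ((x n - x m : Xsub S) : linf) (x n - x m).2
    (ε / (2 * (1 + S.lam))) (by positivity)
  set u : linf := ((x n - x m : Xsub S) : linf) with hu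
  have hPl : S.P l (S.P l y) = S.P l y :=
    congrArg (fun f : linf →L[ℝ] linf => f y) (S.hPproj l)
  have hfix : S.P (max l M) (y - S.P l y) = y - S.P l y := by
    rw [map_sub, S.P_fix_mono hM (le_max_right _ _) y hyM,
      S.P_fix_mono hl (le_max_left _ _) _ hPl]
  refine ⟨n, m, hnm, y - S.P l y, max l M, le_max_left _ _, hfix, ?_, ?_⟩
  · intro k hk
    rcases Nat.eq_zero_or_pos k with rfl | hk0
    · rw [← hfix, S.P_apply (max l M) (max l M + 1) (by omega) (by omega) _ 0 (Nat.zero_le _)]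
      exact (S.mem_Esub_iff _ _).1 (S.step_mem _ (by omega) _ (S.pi_mem _ _)) 0 (by omega)
    · rw [lp.coeFn_sub, Pi.sub_apply, S.P_agree l hl y k hk0 hk, _root_.sub_self]
  · have e : u - (y - S.P l y) = (u - y) - S.P l (u - y) + S.P l u := by
      rw [map_sub]; abel
    have e2 : ‖S.P l (u - y)‖ ≤ S.lam * ‖u - y‖ :=
      ((S.P l).le_opNorm _).trans (by gcongr; exact S.hPnorm l)
    have e3 : ‖S.P l u‖ ≤ ε / 2 := h
    have e4 : (1 + S.lam) * ‖u - y‖ ≤ ε / 2 := by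
      calc _ ≤ (1 + S.lam) * (ε / (2 * (1 + S.lam))) := by gcongr
        _ = ε / 2 := by field_simp
    rw [e]
    refine (norm_add_le _ _).trans ?_
    have := norm_sub_le (u - y) (S.P l (u - y))
    linarith

theorem exists_chain {K : Type*} [TopologicalSpace K] [CompactSpace K]
    (T : Xsub S →L[ℝ] C(K, ℝ)) (C : ℝ) (hC : 0 ≤ C) (hT : ∀ h : C(K, ℝ), ∃ x, T x = h ∧ ‖x‖ ≤ C * ‖h‖)
    (ε : ℝ) (hε : 0 < ε) (r : ℕ) : ∀ (A : Set K), GoodTree r A → ∀ l, 1 ≤ l →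
    ∃ (pt : K) (y : ℕ → Xsub S) (z : ℕ → linf) (L : ℕ → ℕ), pt ∈ A ∧ L 0 = l ∧ Monotone L ∧
      (∀ j < r, T (y j) pt = 1) ∧ (∀ j < r, ‖(y j : linf) - z j‖ ≤ ε) ∧
      (∀ j < r, ‖z j‖ ≤ 2 * C + ε) ∧ (∀ j < r, S.P (L (j + 1)) (z j) = z j) ∧
      (∀ j < r, ∀ k ≤ S.d (L j), z j k = 0) := by
  induction r with
  | zero =>
    rintro A ⟨pt, hpt⟩ l hl
    exact ⟨pt, fun _ => 0, fun _ => 0, fun _ => l, hpt, rfl, monotone_const, by simp, by simp,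
      by simp, by simp, by simp⟩
  | succ r ih =>
    rintro A ⟨B, hB1, hB2, hB3, hB4⟩ l hl
    let h : ℕ → C(K, ℝ) := fun n => (LocallyConstant.charFn ℝ (hB1 n) : C(K, ℝ))
    have hh1 : ∀ n, ∀ t ∈ B n, h n t = 1 := fun n t ht =>
      (LocallyConstant.charFn_eq_one ℝ t (hB1 n)).2 ht
    have hh0 : ∀ n, ∀ t, t ∉ B n → h n t = 0 := fun n t ht =>
      (LocallyConstant.charFn_eq_zero ℝ t (hB1 n)).2 ht
    have hn : ∀ n, ‖h n‖ ≤ 1 := by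
      intro n
      rw [ContinuousMap.norm_le _ zero_le_one]
      intro t
      by_cases ht : t ∈ B n
      · rw [hh1 n t ht, norm_one]
      · rw [hh0 n t ht, norm_zero]; exact zero_le_one
    choose x hx1 hx2 using fun n => hT (h n)
    have hxC : ∀ n, ‖x n‖ ≤ C := fun n => (hx2 n).trans (mul_le_of_le_one_right hC (hn n))
    obtain ⟨n, m, hnm, z0, M, hM, hzM, hz0, hzε⟩ := S.exists_block l hl x C hxC ε hε
    obtain ⟨pt, y, z, L, hpt, hL0, hL, q1, q2, q3, q4, q5⟩ := ih (B n) (hB4 n) M (by omega)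
    refine ⟨pt, fun j => Nat.casesOn j (x n - x m) y, fun j => Nat.casesOn j z0 z,
      fun j => Nat.casesOn j l L, hB3 n hpt, rfl, ?_, ?_, ?_, ?_, ?_, ?_⟩
    · apply monotone_nat_of_le_succ
      rintro (_ | j)
      · show l ≤ L 0
        omega
      · exact hL (Nat.le_succ j)
    · rintro (_ | j) hj
      · show T (x n - x m) pt = 1
        rw [map_sub, hx1, hx1, ContinuousMap.sub_apply, hh1 n pt hpt,
          hh0 m pt (Set.disjoint_left.1 (hB2 n m hnm) hpt), _root_.sub_zero]
      · exact q1 j (by omega)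
    · rintro (_ | j) hj
      · exact hzε
      · exact q2 j (by omega)
    · rintro (_ | j) hj
      · show ‖z0‖ ≤ 2 * C + ε
        have a1 : ‖((x n - x m : Xsub S) : linf)‖ ≤ C + C :=
          (norm_sub_le (x n) (x m)).trans (add_le_add (hxC n) (hxC m))
        have a2 := norm_sub_norm_le z0 ((x n - x m : Xsub S) : linf)
        rw [norm_sub_rev] at a2
        linarith
      · exact q3 j (by omega)
    · rintro (_ | j) hj
      · show S.P (L 0) z0 = z0
        rw [hL0, hzM]
      · exact q4 j (by omega)
    · rintro (_ | j) hj
      · exact hz0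
      · exact q5 j (by omega)

theorem main_contra (T : Xsub S →L[ℝ] C(Set.Iic ((ω : Ordinal) ^ (ω : Ordinal)), ℝ))
    (hsurj : Function.Surjective T) : False := by
  haveI : CompleteSpace (Xsub S) := by
    unfold Xsub
    exact (Submodule.isClosed_topologicalClosure _).completeSpace_coe
  obtain ⟨C, hC, hT⟩ := T.exists_preimage_norm_le hsurj
  have ha : 0 < S.a := S.hb.trans S.hba
  obtain ⟨θ, ρ, hθ, hθ1, hρ, hρ1, hold⟩ := holder_two S.a S.b ha S.ha S.hb (S.hba.trans S.ha)
  set ε : ℝ := 1 / (2 * (‖T‖ + 1)) with hεdef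
  have hTn := norm_nonneg T
  have hε : 0 < ε := by positivity
  have hTε : ‖T‖ * ε ≤ 1 / 2 := by
    rw [hεdef, mul_one_div, div_le_div_iff₀ (by positivity) (by norm_num)]
    linarith
  set D := 2 * C + ε with hD
  set K := 2 * D / (1 - ρ) with hK
  have hK0 : 0 ≤ K := by
    have : 0 < 1 - ρ := by linarith
    positivity
  have main : ∀ N : ℕ, (N : ℝ) ≤ 2 * ‖T‖ * K * (N : ℝ) ^ θ := by
    intro N
    obtain ⟨pt, y, z, L, -, hL0, hL, q1, q2, q3, q4, q5⟩ :=
      S.exists_chain T C hC.le hT ε hε N _ (goodTree_omega N) 2 (by norm_num)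
    have est := S.block_est θ ρ hθ hρ1 hold N z L D hL (by omega) q3 q4 q5 (by positivity)
    have e1 : T (∑ j ∈ Finset.range N, y j) pt = N := by
      rw [map_sum, ContinuousMap.sum_apply, Finset.sum_congr rfl
        (fun j hj => q1 j (Finset.mem_range.1 hj))]
      simp
    have e2 : (N : ℝ) ≤ ‖T‖ * ‖∑ j ∈ Finset.range N, y j‖ := by
      calc (N : ℝ) = T (∑ j ∈ Finset.range N, y j) pt := e1.symm
        _ ≤ ‖T (∑ j ∈ Finset.range N, y j)‖ :=
          (le_abs_self _).trans ((T (∑ j ∈ Finset.range N, y j)).norm_coe_le_norm pt)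
        _ ≤ _ := T.le_opNorm _
    have e3 : ‖∑ j ∈ Finset.range N, z j‖ ≤ K * (N : ℝ) ^ θ := by
      refine lp.norm_le_of_forall_le (by positivity) fun k => ?_
      have := est k 0 N (Nat.zero_le _) le_rfl
      rw [Nat.cast_zero, _root_.sub_zero, ← Finset.range_eq_Ico] at this
      rw [lp.coeFn_sum, Finset.sum_apply]
      exact this
    have e4 : ‖∑ j ∈ Finset.range N, y j‖ ≤ K * (N : ℝ) ^ θ + N * ε := by
      have : ((∑ j ∈ Finset.range N, y j : Xsub S) : linf) =
          ∑ j ∈ Finset.range N, z j + ∑ j ∈ Finset.range N, ((y j : linf) - z j) := by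
        rw [Finset.sum_sub_distrib]
        push_cast
        abel
      rw [Submodule.coe_norm, this]
      refine (norm_add_le _ _).trans (add_le_add e3 ?_)
      refine (norm_sum_le_of_le _ (fun j hj => q2 j (Finset.mem_range.1 hj))).trans ?_
      simp
    have e5 : (N : ℝ) ≤ ‖T‖ * (K * (N : ℝ) ^ θ + N * ε) :=
      e2.trans (mul_le_mul_of_nonneg_left e4 hTn)
    have e6 : ‖T‖ * ε * N ≤ 1 / 2 * N := mul_le_mul_of_nonneg_right hTε (Nat.cast_nonneg N)
    nlinarith
  have hlim : Filter.Tendsto (fun N : ℕ => (N : ℝ) ^ (1 - θ)) Filter.atTop Filter.atTop :=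
    (tendsto_rpow_atTop (by linarith)).comp tendsto_natCast_atTop_atTop
  obtain ⟨N, hN, hN1⟩ := ((hlim.eventually (Filter.eventually_gt_atTop (2 * ‖T‖ * K))).and
    (Filter.eventually_ge_atTop 1)).exists
  have hNpos : (0 : ℝ) < N := by exact_mod_cast hN1
  have h1 : (N : ℝ) = (N : ℝ) ^ (1 - θ) * (N : ℝ) ^ θ := by
    rw [← Real.rpow_add hNpos]; simp
  have h2 := main N
  have h3 := mul_lt_mul_of_pos_right hN (Real.rpow_pos_of_pos hNpos θ)
  linarith

end BDSetup

end BDProof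

/-- `C([0, ω^ω])` is not isomorphic to a quotient of the Bourgain–Delbaen
space `X`; there is no bounded linear surjection from `X` onto `C([0, ω^ω])`. -/
theorem stmt_18 (S : BDSetup) :
    ¬ ∃ T : (Xsub S) →L[ℝ] C(Set.Iic ((ω : Ordinal) ^ (ω : Ordinal)), ℝ),
        Function.Surjective T := by
  rintro ⟨T, hT⟩
  exact S.main_contra T hT
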